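/- For all nonnegative real numbers S, I, C with C ≥ max{S, I}, one has log₂(1 + C/(1+I+S)) + log₂(1 + I + S(1+C)/(1+I+C)) + 1 ≥ log₂(1 + (√S + √I)²). -/

import Mathlib

/-!
Write `D = 1 + I + S` and `E = 1 + I + C`. Since `S * (1 + C) / E = S - S * I / E`, the product of
the arguments of the first two logarithms is `D + C - S * I * (D + C) / (D * E)`. It is at least `D`
as soon as `S ≤ C`, because `I * (D + C) ≤ D * E`. The summand `1 = log₂ 2` absorbs the factor `2`
in `(√S + √I) ^ 2 ≤ 2 * (S + I)`.
-/

theorem add_add_le_one_add_div_mul_add_div {K : Type*} [Field K] [LinearOrder K]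
    [IsStrictOrderedRing K] {n s i c : K} (hn : 0 < n) (hs : 0 ≤ s) (hi : 0 ≤ i) (hsc : s ≤ c) :
    n + i + s ≤ (1 + c / (n + i + s)) * (n + i + s * (n + c) / (n + i + c)) := by
  have hc : 0 ≤ c := hs.trans hsc
  have interference_le : i * (n + i + s + c) ≤ (n + i + s) * (n + i + c) :=
    calc i * (n + i + s + c) = (n + i + s) * i + i * c := by ring
      _ ≤ (n + i + s) * (n + i) + (n + i + s) * c := by gcongr <;> linarith
      _ = (n + i + s) * (n + i + c) := by ring
  have defect_le : s * (i * (n + i + s + c)) ≤ c * ((n + i + s) * (n + i + c)) := by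
    gcongr
  calc n + i + s
      ≤ n + i + s + (c * ((n + i + s) * (n + i + c)) - s * (i * (n + i + s + c)))
          / ((n + i + s) * (n + i + c)) :=
        le_add_of_nonneg_right (div_nonneg (sub_nonneg.mpr defect_le) (by positivity))
    _ = (1 + c / (n + i + s)) * (n + i + s * (n + c) / (n + i + c)) := by
        field_simp
        ring

theorem sqrt_add_sqrt_sq_le {x y : ℝ} (hx : 0 ≤ x) (hy : 0 ≤ y) :
    (√x + √y) ^ 2 ≤ 2 * (x + y) := by
  simpa only [Real.sq_sqrt hx, Real.sq_sqrt hy] using add_sq_le (a := √x) (b := √y)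

theorem logb_mul_mul_self {b x y : ℝ} (hb : 1 < b) (hx : x ≠ 0) (hy : y ≠ 0) :
    Real.logb b (x * y * b) = Real.logb b x + Real.logb b y + 1 := by
  rw [Real.logb_mul (mul_ne_zero hx hy) (by positivity), Real.logb_mul hx hy,
    Real.logb_self_eq_one hb]

theorem stmt_17_general {S I C : ℝ} (hS : 0 ≤ S) (hI : 0 ≤ I) (hSC : S ≤ C) :
    Real.logb 2 (1 + (√S + √I) ^ 2) ≤
      Real.logb 2 (1 + C / (1 + I + S)) + Real.logb 2 (1 + I + S * (1 + C) / (1 + I + C)) + 1 := by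
  have : 0 ≤ C := hS.trans hSC
  rw [← logb_mul_mul_self one_lt_two (by positivity) (by positivity)]
  refine Real.logb_le_logb_of_le one_lt_two (by positivity) ?_
  calc 1 + (√S + √I) ^ 2
      ≤ (1 + I + S) * 2 := by linarith [sqrt_add_sqrt_sq_le hS hI]
    _ ≤ (1 + C / (1 + I + S)) * (1 + I + S * (1 + C) / (1 + I + C)) * 2 := by
        gcongr
        exact add_add_le_one_add_div_mul_add_div one_pos hS hI hSC

theorem stmt_17 (S I C : ℝ) (hS : 0 ≤ S) (hI : 0 ≤ I) (hC : 0 ≤ C)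
    (hCb : C ≥ max S I) :
    Real.logb 2 (1 + C / (1 + I + S)) + Real.logb 2 (1 + I + S * (1 + C) / (1 + I + C)) + 1
      ≥ Real.logb 2 (1 + (Real.sqrt S + Real.sqrt I) ^ 2) :=
  stmt_17_general hS hI ((le_max_left S I).trans hCb)
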